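/- Let x₀ > 0 and define xₙ = arcsinh(xₙ₋₁) = log(xₙ₋₁ + √(1 + xₙ₋₁²)) for n ≥ 1. Then n·xₙ² → 3 as n → ∞. -/

import Mathlib

open Filter

lemma sinh_cubic_bound (y : ℝ) (hy : 0 < y) (hy1 : y ≤ 1) :
    |Real.sinh y - y - y ^ 3 / 6| ≤ y ^ 4 := by
  have h1 := Real.exp_bound (x := y) (by rw [abs_of_pos hy]; exact hy1) (n := 4) (by norm_num)
  have h2 := Real.exp_bound (x := -y) (by rw [abs_neg, abs_of_pos hy]; exact hy1)
    (n := 4) (by norm_num)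
  rw [abs_neg] at h2
  rw [abs_of_pos hy] at h1 h2
  simp [Finset.sum_range_succ, Nat.factorial] at h1 h2
  rw [abs_le] at h1 h2 ⊢
  rw [Real.sinh_eq]
  have h4 : 0 < y ^ 4 := by positivity
  have h3 : (-y) ^ 3 = - y ^ 3 := by ring
  rw [h3] at h2
  constructor <;> linarith [h1.1, h1.2, h2.1, h2.2]

lemma cubic_tendsto (y : ℕ → ℝ) (hy : ∀ n, 0 < y n) (h0 : Tendsto y atTop (nhds 0)) :
    Tendsto (fun n => (Real.sinh (y n) - y n) / y n ^ 3) atTop (nhds (1 / 6)) := by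
  rw [tendsto_iff_norm_sub_tendsto_zero]
  refine squeeze_zero' (Eventually.of_forall fun n => norm_nonneg _) ?_ h0
  filter_upwards [h0.eventually (ge_mem_nhds (show (0 : ℝ) < 1 by norm_num))] with n hn
  have hp := hy n
  have hb := sinh_cubic_bound (y n) hp hn
  have e : (Real.sinh (y n) - y n) / y n ^ 3 - 1 / 6
      = (Real.sinh (y n) - y n - y n ^ 3 / 6) / y n ^ 3 := by
    field_simp
  rw [e, Real.norm_eq_abs, abs_div, abs_of_pos (show 0 < y n ^ 3 by positivity),
    div_le_iff₀ (by positivity)]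
  calc _ ≤ _ := hb
    _ = _ := by ring

/-- For the recursion `x (n+1) = arcsinh (x n) = log (x n + √(1 + (x n)²))` with
`x 0 > 0`, one has `n * (x n)² → 3`. -/
theorem arcsinh_iterates_asymptotics (x : ℕ → ℝ)
    (hx0 : x 0 > 0)
    (hrec : ∀ n : ℕ, x (n + 1) = Real.log (x n + Real.sqrt (1 + x n ^ 2))) :
    Tendsto (fun n : ℕ => (n : ℝ) * x n ^ 2) atTop (nhds 3) := by
  have hr : ∀ n, x (n + 1) = Real.arsinh (x n) := hrec
  have hpos : ∀ n, 0 < x n := by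
    intro n
    induction n with
    | zero => exact hx0
    | succ k ih => rw [hr]; exact Real.arsinh_pos_iff.2 ih
  have hs : ∀ n, x n = Real.sinh (x (n + 1)) := fun n => by rw [hr, Real.sinh_arsinh]
  have hanti : Antitone x := antitone_nat_of_succ_le fun n => by
    conv_rhs => rw [hs n]
    exact Real.self_le_sinh_iff.2 (hpos _).le
  have h0 : Tendsto x atTop (nhds 0) := by
    have hb : BddBelow (Set.range x) := ⟨0, by rintro _ ⟨n, rfl⟩; exact (hpos n).le⟩
    have hl := tendsto_atTop_ciInf hanti hb
    set L := ⨅ i, x i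
    have h1 : Tendsto (fun n => x (n + 1)) atTop (nhds L) := (tendsto_add_atTop_iff_nat 1).2 hl
    have h2 : Tendsto x atTop (nhds (Real.sinh L)) := by
      have := (Real.continuous_sinh.tendsto L).comp h1
      exact this.congr fun n => (hs n).symm
    have h3 := tendsto_nhds_unique hl h2
    have h4 : L ≤ 0 := Real.sinh_le_self_iff.1 h3.ge
    have h5 : 0 ≤ L := ge_of_tendsto' hl fun n => (hpos n).le
    rwa [le_antisymm h4 h5] at hl
  let y : ℕ → ℝ := fun n => x (n + 1)
  have hyp : ∀ n, 0 < y n := fun n => hpos _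
  have hy0 : Tendsto y atTop (nhds 0) := (tendsto_add_atTop_iff_nat 1).2 h0
  have hc := cubic_tendsto y hyp hy0
  have hq : Tendsto (fun n => 1 + (Real.sinh (y n) - y n) / y n ^ 3 * y n ^ 2) atTop
      (nhds (1 + 1 / 6 * 0 ^ 2)) := (hc.mul (hy0.pow 2)).const_add 1
  have hd : Tendsto (fun n => 1 / x (n + 1) ^ 2 - 1 / x n ^ 2) atTop (nhds (1 / 3)) := by
    have := (hc.mul (hq.add_const 1)).div (hq.pow 2) (by norm_num)
    have e : (1 / 6 * (1 + 1 / 6 * 0 ^ 2 + 1) / (1 + 1 / 6 * 0 ^ 2) ^ 2 : ℝ) = 1 / 3 := by norm_num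
    rw [e] at this
    refine this.congr fun n => ?_
    have hxn := hpos n
    have hyn := hyp n
    have hsn : Real.sinh (y n) = x n := (hs n).symm
    have q : 1 + (x n - y n) / y n ^ 3 * y n ^ 2 = x n / y n := by
      field_simp; ring
    change _ = 1 / y n ^ 2 - 1 / x n ^ 2
    simp only [Pi.div_apply, Pi.mul_apply, Pi.pow_apply]
    rw [hsn, q]
    field_simp
    ring
  have hces := hd.cesaro
  have ht : ∀ n, ∑ i ∈ Finset.range n, (1 / x (i + 1) ^ 2 - 1 / x i ^ 2)
      = 1 / x n ^ 2 - 1 / x 0 ^ 2 := fun n => Finset.sum_range_sub (fun i => 1 / x i ^ 2) n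
  simp only [ht] at hces
  have hn : Tendsto (fun n : ℕ => (n : ℝ)⁻¹ * (1 / x 0 ^ 2)) atTop (nhds (0 * (1 / x 0 ^ 2))) :=
    tendsto_inv_atTop_nhds_zero_nat.mul_const _
  have hf := (hces.add hn).inv₀ (by norm_num)
  have e : ((1 / 3 + 0 * (1 / x 0 ^ 2) : ℝ))⁻¹ = 3 := by norm_num
  rw [e] at hf
  refine hf.congr fun n => ?_
  rw [← mul_add, sub_add_cancel, mul_inv, inv_inv, one_div, inv_inv]
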